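/- Let a_1, ..., a_m be integers with a_i ≥ 6 and let Γ be the linear-graph lattice with weight sequence (a_1 - 2) twos, 3, (a_2 - 3) twos, 3, ..., 3, (a_m - 2) twos. Then for any N ≥ m + rk(Γ), the embedding of Γ into the standard lattice Z^N is unique up to an automorphism of Z^N given by permuting and changing signs of the standard basis vectors. -/

import Mathlib

open scoped BigOperators

/-- The standard positive definite inner product on `ℤ^N`. -/
def dot {N : ℕ} (v w : Fin N → ℤ) : ℤ := ∑ i, v i * w i

/-- The weight sequence `(a 1 - 2)` twos, `3`, `(a 2 - 3)` twos, `3`, …, `3`,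
`(a m - 2)` twos of the linear plumbing graph dual to `(a 1, …, a m)`. -/
def weightList (m : ℕ) (a : ℕ → ℕ) : List ℕ :=
  List.replicate (a 1 - 2) 2 ++
    (List.range (m - 1)).flatMap fun i =>
      3 :: List.replicate (a (i + 2) - (if i = m - 2 then 2 else 3)) 2

/-- The Gram matrix of the integral lattice determined by a linear graph with
the given vertex weights: consecutive vertices pair to `1`, non-adjacent ones to `0`. -/
def linGram (w : List ℕ) : Matrix (Fin w.length) (Fin w.length) ℤ :=
  Matrix.of fun i j =>
    if i = j then (w.get i : ℤ)
    else if i.val + 1 = j.val ∨ j.val + 1 = i.val then 1 else 0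

/-- The support of an integer vector. -/
def vsupp {N : ℕ} (v : Fin N → ℤ) : Finset (Fin N) := Finset.univ.filter fun p => v p ≠ 0

theorem mem_vsupp {N : ℕ} {v : Fin N → ℤ} {p : Fin N} : p ∈ vsupp v ↔ v p ≠ 0 := by
  simp [vsupp]

theorem dot_comm {N : ℕ} (v w : Fin N → ℤ) : dot v w = dot w v := by
  simp [dot, mul_comm]

theorem dot_eq_sum_vsupp {N : ℕ} (v w : Fin N → ℤ) : dot v w = ∑ p ∈ vsupp w, v p * w p := by
  unfold dot
  symm
  apply Finset.sum_subset (Finset.subset_univ _)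
  intro p _ hp
  simp [mem_vsupp] at hp
  simp [hp]

/-- Every entry is `0`, `1` or `-1`. -/
def IsTernary {N : ℕ} (v : Fin N → ℤ) : Prop := ∀ p, v p = 0 ∨ v p = 1 ∨ v p = -1

theorem isTernary_of_dot_self_le {N : ℕ} {v : Fin N → ℤ} (h : dot v v ≤ 3) : IsTernary v := by
  intro p
  have h1 : v p * v p ≤ dot v v :=
    Finset.single_le_sum (f := fun p => v p * v p) (fun i _ => mul_self_nonneg (v i))
      (Finset.mem_univ p)
  have h2 : v p ≤ 1 := by nlinarith
  have h3 : -1 ≤ v p := by nlinarith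
  omega

theorem IsTernary.mul_self {N : ℕ} {v : Fin N → ℤ} (hv : IsTernary v) {p : Fin N}
    (hp : p ∈ vsupp v) : v p * v p = 1 := by
  rw [mem_vsupp] at hp
  rcases hv p with h | h | h <;> simp_all

theorem IsTernary.card_vsupp {N : ℕ} {v : Fin N → ℤ} (hv : IsTernary v) :
    ((vsupp v).card : ℤ) = dot v v := by
  rw [dot_eq_sum_vsupp, Finset.sum_congr rfl fun p hp => hv.mul_self hp]
  simp

theorem IsTernary.two_dvd {N : ℕ} {v w : Fin N → ℤ} (hv : IsTernary v) (hw : IsTernary w) :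
    (2 : ℤ) ∣ dot v w - (vsupp v ∩ vsupp w).card := by
  have h : ((vsupp v ∩ vsupp w).card : ℤ) = ∑ p, if p ∈ vsupp v ∩ vsupp w then 1 else 0 := by
    rw [Finset.sum_boole, Finset.filter_univ_mem]
  rw [h, dot, ← Finset.sum_sub_distrib]
  apply Finset.dvd_sum
  intro p _
  simp only [Finset.mem_inter, mem_vsupp]
  rcases hv p with h | h | h <;> rcases hw p with h' | h' | h' <;> simp [h, h']

/-- Two roots meeting in one coordinate, both orthogonal to a vector `v` of norm three whose
support they meet, generate `v` modulo three. -/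
theorem three_dvd_of_dot_eq_zero {N : ℕ} {x y v u : Fin N → ℤ} (hx : dot x x = 2)
    (hy : dot y y = 2) (hv : dot v v = 3) (hxy : dot x y = 1) (hvx : dot v x = 0)
    (hvy : dot v y = 0) (hne : (vsupp v ∩ vsupp x).Nonempty) (huv : dot u v = 0) :
    (3 : ℤ) ∣ dot u x + dot u y := by
  have tx : IsTernary x := isTernary_of_dot_self_le (by omega)
  have ty : IsTernary y := isTernary_of_dot_self_le (by omega)
  have tv : IsTernary v := isTernary_of_dot_self_le (by omega)
  have cx := tx.card_vsupp
  have cy := ty.card_vsupp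
  have cv := tv.card_vsupp
  have sub : ∀ z : Fin N → ℤ, IsTernary z → (vsupp z).card = 2 → dot v z = 0 →
      (vsupp v ∩ vsupp z).Nonempty → vsupp z ⊆ vsupp v := by
    intro z tz cz hz hn
    have h1 := tv.two_dvd tz
    have h2 := hn.card_pos
    have h3 : vsupp v ∩ vsupp z = vsupp z :=
      Finset.eq_of_subset_of_card_le Finset.inter_subset_right (by omega)
    rw [← h3]
    exact Finset.inter_subset_left
  have sx := sub x tx (by omega) hvx hne
  have c1 : (vsupp x ∩ vsupp y).card = 1 := by
    have h1 := tx.two_dvd ty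
    have h2 := Finset.card_le_card (Finset.inter_subset_left (s₁ := vsupp x) (s₂ := vsupp y))
    omega
  obtain ⟨b, hb⟩ := Finset.card_eq_one.mp c1
  have hb' : b ∈ vsupp x ∩ vsupp y := by simp [hb]
  rw [Finset.mem_inter] at hb'
  obtain ⟨hbx, hby⟩ := hb'
  have sy := sub y ty (by omega) hvy ⟨b, Finset.mem_inter.mpr ⟨sx hbx, hby⟩⟩
  have huni : vsupp x ∪ vsupp y = vsupp v := by
    apply Finset.eq_of_subset_of_card_le (Finset.union_subset sx sy)
    have := Finset.card_union_add_card_inter (vsupp x) (vsupp y)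
    omega
  have hxyb : x b * y b = 1 := by
    have : dot x y = ∑ p ∈ vsupp x ∩ vsupp y, x p * y p := by
      rw [dot_eq_sum_vsupp]
      symm
      apply Finset.sum_subset Finset.inter_subset_right
      intro p hp hp'
      have : p ∉ vsupp x := fun h => hp' (Finset.mem_inter.mpr ⟨h, hp⟩)
      rw [mem_vsupp, not_not] at this
      simp [this]
    rw [hb, Finset.sum_singleton] at this
    omega
  have hyb : y b = x b := by
    rcases tx b with h | h | h <;> rcases ty b with h' | h' | h' <;> simp_all
  have pair : ∀ z : Fin N → ℤ, IsTernary z → (vsupp z).card = 2 → dot v z = 0 → b ∈ vsupp z →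
      ∀ p ∈ vsupp z, p ≠ b → v p = -(v b * z b) * z p := by
    intro z tz cz hz hbz p hp hpb
    have h1 : ({p, b} : Finset (Fin N)) = vsupp z := by
      apply Finset.eq_of_subset_of_card_le
      · simp [Finset.insert_subset_iff, hp, hbz]
      · rw [Finset.card_pair hpb, cz]
    rw [dot_eq_sum_vsupp, ← h1, Finset.sum_pair hpb] at hz
    have h2 := tz.mul_self hp
    linear_combination z p * hz - v p * h2
  have px := pair x tx (by omega) hvx hbx
  have py := pair y ty (by omega) hvy hby
  set ε : ℤ := -(v b * x b) with hε
  rw [hyb, ← hε] at py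
  have key : ∀ p, (3 : ℤ) ∣ v p - ε * (x p + y p) := by
    intro p
    by_cases hpb : p = b
    · subst hpb
      have := tx.mul_self hbx
      refine ⟨v p, ?_⟩
      rw [hyb, hε]
      linear_combination 2 * v p * this
    · have hnot : ¬ (p ∈ vsupp x ∧ p ∈ vsupp y) := by
        rw [← Finset.mem_inter, hb]
        simpa using hpb
      by_cases hpx : p ∈ vsupp x
      · have h0 : y p = 0 := by
          by_contra h
          exact hnot ⟨hpx, mem_vsupp.mpr h⟩
        simp [px p hpx hpb, h0]
      · have h0 : x p = 0 := by
          by_contra h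
          exact hpx (mem_vsupp.mpr h)
        by_cases hpy : p ∈ vsupp y
        · simp [py p hpy hpb, h0]
        · have h1 : y p = 0 := by
            by_contra h
            exact hpy (mem_vsupp.mpr h)
          have h2 : v p = 0 := by
            by_contra h
            have := mem_vsupp.mpr h
            rw [← huni, Finset.mem_union] at this
            tauto
          simp [h0, h1, h2]
  have hsum : dot u v - ε * (dot u x + dot u y) = ∑ p, u p * (v p - ε * (x p + y p)) := by
    simp only [dot, ← Finset.sum_add_distrib, Finset.mul_sum, ← Finset.sum_sub_distrib]
    exact Finset.sum_congr rfl fun p _ => by ring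
  have hdvd : (3 : ℤ) ∣ dot u v - ε * (dot u x + dot u y) := by
    rw [hsum]
    exact Finset.dvd_sum fun p _ => Dvd.dvd.mul_left (key p) _
  have hεε : ε * ε = 1 := by
    have h1 := tx.mul_self hbx
    have h2 := tv.mul_self (sx hbx)
    rw [hε]
    linear_combination (x b * x b) * h2 + h1
  have : dot u x + dot u y = -ε * (dot u v - ε * (dot u x + dot u y)) := by
    rw [huv]
    linear_combination -(dot u x + dot u y) * hεε
  rw [this]
  exact Dvd.dvd.mul_left hdvd _

/-- A family of vectors realising a linear graph with weights two and three, in which the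
weights equal to three are far from the ends and from each other. -/
structure IsPlumbingChain {N : ℕ} (n : ℕ) (w : ℕ → ℕ) (X : ℕ → Fin N → ℤ) : Prop where
  four_le : 4 ≤ n
  weight : ∀ t < n, w t = 2 ∨ w t = 3
  three : ∀ t < n, w t = 3 → 4 ≤ t ∧ t + 4 < n ∧ w (t - 1) = 2 ∧ w (t - 2) = 2 ∧ w (t - 3) = 2 ∧
    w (t + 1) = 2 ∧ w (t + 2) = 2 ∧ w (t + 3) = 2
  self : ∀ j < n, dot (X j) (X j) = w j
  adj : ∀ j, j + 1 < n → dot (X j) (X (j + 1)) = 1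
  far : ∀ i j, i + 1 < j → j < n → dot (X i) (X j) = 0

namespace IsPlumbingChain

variable {N n : ℕ} {w : ℕ → ℕ} {X : ℕ → Fin N → ℤ}

theorem ternary (h : IsPlumbingChain n w X) {j : ℕ} (hj : j < n) : IsTernary (X j) := by
  apply isTernary_of_dot_self_le
  rw [h.self j hj]
  rcases h.weight j hj with h | h <;> simp [h]

theorem card (h : IsPlumbingChain n w X) {j : ℕ} (hj : j < n) : (vsupp (X j)).card = w j := by
  have h1 := (h.ternary hj).card_vsupp
  have h2 := h.self j hj
  omega

theorem even_inter (h : IsPlumbingChain n w X) {i j : ℕ} (hij : i + 1 < j) (hj : j < n) :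
    2 ∣ (vsupp (X i) ∩ vsupp (X j)).card := by
  have h1 := (h.ternary (show i < n by omega)).two_dvd (h.ternary hj)
  have h2 := h.far i j hij hj
  omega

theorem card_inter_adj (h : IsPlumbingChain n w X) {j : ℕ} (hj : j + 1 < n) :
    (vsupp (X j) ∩ vsupp (X (j + 1))).card = 1 := by
  have h1 := (h.ternary (show j < n by omega)).two_dvd (h.ternary hj)
  have h2 := h.adj j hj
  have h3 := Finset.card_le_card
    (Finset.inter_subset_left (s₁ := vsupp (X j)) (s₂ := vsupp (X (j + 1))))
  have h4 := Finset.card_le_card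
    (Finset.inter_subset_right (s₁ := vsupp (X j)) (s₂ := vsupp (X (j + 1))))
  rw [h.card (by omega)] at h3 h4
  have h5 := h.weight j (by omega)
  have h6 := h.weight (j + 1) hj
  have h7 : w j = 3 → w (j + 1) = 2 := fun h' => (h.three j (by omega) h').2.2.2.2.2.1
  omega

theorem mul_eq_one (h : IsPlumbingChain n w X) {j : ℕ} (hj : j + 1 < n) {p : Fin N}
    (h1 : X j p ≠ 0) (h2 : X (j + 1) p ≠ 0) : X j p * X (j + 1) p = 1 := by
  obtain ⟨b, hb⟩ := Finset.card_eq_one.mp (h.card_inter_adj hj)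
  have hp : p ∈ vsupp (X j) ∩ vsupp (X (j + 1)) := by simp [mem_vsupp, h1, h2]
  have hpb : p = b := by simpa [hb] using hp
  subst hpb
  have := h.adj j hj
  rw [← this, dot, Finset.sum_eq_single p]
  · intro q _ hq
    by_contra hne
    have : q ∈ vsupp (X j) ∩ vsupp (X (j + 1)) := by
      rw [Finset.mem_inter, mem_vsupp, mem_vsupp]
      exact ⟨left_ne_zero_of_mul hne, right_ne_zero_of_mul hne⟩
    rw [hb] at this
    exact hq (by simpa using this)
  · simp

theorem disjoint_two_two (h : IsPlumbingChain n w X) {i j : ℕ} (hij : i + 1 < j) (hj : j < n)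
    (wi : w i = 2) (wj : w j = 2) : Disjoint (vsupp (X i)) (vsupp (X j)) := by
  rw [Finset.disjoint_iff_inter_eq_empty]
  by_contra hne
  have hpos := (Finset.nonempty_iff_ne_empty.mpr hne).card_pos
  have hev := h.even_inter hij hj
  have ci := h.card (show i < n by omega)
  have cj := h.card hj
  have e1 : vsupp (X i) ∩ vsupp (X j) = vsupp (X i) :=
    Finset.eq_of_subset_of_card_le Finset.inter_subset_left (by omega)
  have e2 : vsupp (X i) ∩ vsupp (X j) = vsupp (X j) :=
    Finset.eq_of_subset_of_card_le Finset.inter_subset_right (by omega)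
  have e : vsupp (X i) = vsupp (X j) := e1.symm.trans e2
  have par : ∀ k < n, (2 : ℤ) ∣ dot (X k) (X i) - dot (X k) (X j) := by
    intro k hk
    have h1 := (h.ternary hk).two_dvd (h.ternary (show i < n by omega))
    have h2 := (h.ternary hk).two_dvd (h.ternary hj)
    rw [e] at h1
    omega
  rcases Nat.eq_zero_or_pos i with hi | hi
  · by_cases hj' : j + 1 < n
    · have h1 := par (j + 1) hj'
      rw [dot_comm, h.far i (j + 1) (by omega) hj', dot_comm, h.adj j hj'] at h1
      omega
    · have h1 := par (i + 1) (by omega)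
      have := h.four_le
      rw [dot_comm, h.adj i (by omega), h.far (i + 1) j (by omega) hj] at h1
      omega
  · obtain ⟨k, rfl⟩ : ∃ k, i = k + 1 := ⟨i - 1, by omega⟩
    have h1 := par k (by omega)
    rw [h.adj k (by omega), h.far k j (by omega) hj] at h1
    omega

theorem dot_eq_zero_of_far (h : IsPlumbingChain n w X) {i j : ℕ} (hi : i < n) (hj : j < n)
    (hij : i + 1 < j ∨ j + 1 < i) : dot (X i) (X j) = 0 := by
  rcases hij with h' | h'
  · exact h.far i j h' hj
  · rw [dot_comm]
    exact h.far j i h' hi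

/-- A vector of weight three is disjoint from two adjacent roots orthogonal to it. -/
theorem disjoint_pair (h : IsPlumbingChain n w X) {j t : ℕ} (hj : j + 1 < n) (ht : t < n)
    (wj : w j = 2) (wj' : w (j + 1) = 2) (wt : w t = 3) (hjt : t + 1 < j ∨ j + 2 < t) :
    Disjoint (vsupp (X t)) (vsupp (X j)) ∧ Disjoint (vsupp (X t)) (vsupp (X (j + 1))) := by
  have sj : dot (X j) (X j) = 2 := by simp [h.self j (by omega), wj]
  have sj' : dot (X (j + 1)) (X (j + 1)) = 2 := by simp [h.self (j + 1) hj, wj']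
  have st : dot (X t) (X t) = 3 := by simp [h.self t ht, wt]
  have z1 : dot (X t) (X j) = 0 := h.dot_eq_zero_of_far ht (by omega) (by omega)
  have z2 : dot (X t) (X (j + 1)) = 0 := h.dot_eq_zero_of_far ht hj (by omega)
  have a1 := h.adj j hj
  have a2 : dot (X (j + 1)) (X j) = 1 := by rw [dot_comm, a1]
  have th := h.three t ht wt
  have pos : (j + 2 < n ∧ (t + 1 < j + 2 ∨ j + 3 < t)) ∨ (0 < j ∧ (t + 1 < j - 1 ∨ j < t)) := by
    omega
  have hex : ∃ k < n, dot (X k) (X t) = 0 ∧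
      dot (X k) (X j) + dot (X k) (X (j + 1)) = 1 := by
    have right : j + 2 < n → (t + 1 < j + 2 ∨ j + 3 < t) → ∃ k < n, dot (X k) (X t) = 0 ∧
        dot (X k) (X j) + dot (X k) (X (j + 1)) = 1 := by
      intro h1 h2
      refine ⟨j + 2, h1, h.dot_eq_zero_of_far h1 ht (by omega), ?_⟩
      rw [h.dot_eq_zero_of_far (i := j + 2) (j := j) h1 (by omega) (by omega), dot_comm,
        h.adj (j + 1) h1]
      rfl
    have left : 0 < j → (t + 1 < j - 1 ∨ j < t) → ∃ k < n, dot (X k) (X t) = 0 ∧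
        dot (X k) (X j) + dot (X k) (X (j + 1)) = 1 := by
      intro h1 h2
      obtain ⟨i, rfl⟩ : ∃ i, j = i + 1 := ⟨j - 1, by omega⟩
      refine ⟨i, by omega, h.dot_eq_zero_of_far (by omega) ht (by omega), ?_⟩
      rw [h.dot_eq_zero_of_far (i := i) (j := i + 1 + 1) (by omega) hj (by omega),
        h.adj i (by omega)]
      rfl
    exact pos.elim (fun p => right p.1 p.2) fun p => left p.1 p.2
  obtain ⟨k, hk, hkt, hsum⟩ := hex
  constructor
  · by_contra hd
    have := three_dvd_of_dot_eq_zero sj sj' st a1 z1 z2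
      (Finset.not_disjoint_iff_nonempty_inter.mp hd) hkt
    omega
  · by_contra hd
    have := three_dvd_of_dot_eq_zero sj' sj st a2 z2 z1
      (Finset.not_disjoint_iff_nonempty_inter.mp hd) hkt
    omega

theorem disjoint_three_two (h : IsPlumbingChain n w X) {j t : ℕ} (hj : j < n) (ht : t < n)
    (wj : w j = 2) (wt : w t = 3) (hjt : t + 1 < j ∨ j + 1 < t) :
    Disjoint (vsupp (X t)) (vsupp (X j)) := by
  have th := h.three t ht wt
  have right : j + 1 < n → w (j + 1) = 2 → (t < j ∨ j + 2 < t) →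
      Disjoint (vsupp (X t)) (vsupp (X j)) := fun h1 h2 h3 =>
    (h.disjoint_pair h1 ht wj h2 wt (by omega)).1
  have left : 0 < j → w (j - 1) = 2 → (t + 2 < j ∨ j < t) →
      Disjoint (vsupp (X t)) (vsupp (X j)) := by
    intro h1 h2 h3
    obtain ⟨i, rfl⟩ : ∃ i, j = i + 1 := ⟨j - 1, by omega⟩
    exact (h.disjoint_pair hj ht h2 wj wt (by omega)).2
  rcases hjt with hlt | hlt
  · by_cases h1 : j = t + 2
    · subst h1
      exact right (by omega) th.2.2.2.2.2.2.2 (by omega)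
    · rcases h.weight (j - 1) (by omega) with h2 | h2
      · exact left (by omega) h2 (by omega)
      · have h3 := h.three (j - 1) (by omega) h2
        have e : j - 1 + 2 = j + 1 := by omega
        rw [e] at h3
        exact right (by omega) h3.2.2.2.2.2.2.1 (by omega)
  · by_cases h1 : t = j + 2
    · subst h1
      have e : j + 2 - 3 = j - 1 := by omega
      rw [e] at th
      exact left (by omega) th.2.2.2.2.1 (by omega)
    · rcases h.weight (j + 1) (by omega) with h2 | h2
      · exact right (by omega) h2 (by omega)
      · have h3 := h.three (j + 1) (by omega) h2
        have e : j + 1 - 2 = j - 1 := by omega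
        rw [e] at h3
        exact left (by omega) h3.2.2.2.1 (by omega)

theorem disjoint_three_three (h : IsPlumbingChain n w X) {s t : ℕ} (hst : s + 1 < t) (ht : t < n)
    (ws : w s = 3) (wt : w t = 3) : Disjoint (vsupp (X s)) (vsupp (X t)) := by
  by_contra hd
  have hpos := (Finset.not_disjoint_iff_nonempty_inter.mp hd).card_pos
  have hev := h.even_inter hst ht
  have hs3 := h.three s (by omega) ws
  have ht3 := h.three t ht wt
  have cs := h.card (show s < n by omega)
  have hcard := Finset.card_sdiff_add_card_inter (vsupp (X s)) (vsupp (X t))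
  have c1 : (vsupp (X s) \ vsupp (X t)).card ≤ 1 := by omega
  have hfar : s + 2 < t := by
    by_contra hlt
    have : s + 2 = t := by omega
    subst this
    omega
  obtain ⟨k, rfl⟩ : ∃ k, s = k + 1 := ⟨s - 1, by omega⟩
  have d1 := h.disjoint_three_two (j := k) (t := t) (by omega) ht hs3.2.2.1 wt (by omega)
  have d2 := h.disjoint_three_two (j := k + 1 + 1) (t := t) (by omega) ht hs3.2.2.2.2.2.1 wt
    (by omega)
  have d3 := h.disjoint_two_two (i := k) (j := k + 1 + 1) (by omega) (by omega) hs3.2.2.1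
    hs3.2.2.2.2.2.1
  obtain ⟨p, hp⟩ := Finset.card_pos.mp
    (show 0 < (vsupp (X k) ∩ vsupp (X (k + 1))).card by rw [h.card_inter_adj (by omega)]; simp)
  obtain ⟨q, hq⟩ := Finset.card_pos.mp
    (show 0 < (vsupp (X (k + 1)) ∩ vsupp (X (k + 1 + 1))).card by
      rw [h.card_inter_adj (by omega)]; simp)
  rw [Finset.mem_inter] at hp hq
  have hp' : p ∈ vsupp (X (k + 1)) \ vsupp (X t) :=
    Finset.mem_sdiff.mpr ⟨hp.2, Finset.disjoint_right.mp d1 hp.1⟩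
  have hq' : q ∈ vsupp (X (k + 1)) \ vsupp (X t) :=
    Finset.mem_sdiff.mpr ⟨hq.1, Finset.disjoint_right.mp d2 hq.2⟩
  have hpq := Finset.card_le_one.mp c1 p hp' q hq'
  subst hpq
  exact Finset.disjoint_left.mp d3 hp.1 hq.2

theorem disjoint (h : IsPlumbingChain n w X) {i j : ℕ} (hij : i + 1 < j) (hj : j < n) :
    Disjoint (vsupp (X i)) (vsupp (X j)) := by
  have hi : i < n := by omega
  rcases h.weight i hi with wi | wi <;> rcases h.weight j hj with wj | wj
  · exact h.disjoint_two_two hij hj wi wj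
  · exact (h.disjoint_three_two hi hj wi wj (by omega)).symm
  · exact h.disjoint_three_two hj hi wj wi (by omega)
  · exact h.disjoint_three_three hij hj wi wj

end IsPlumbingChain

/-- Two finite families of sets of at most two elements whose pair counts agree differ by a
permutation of the indices. -/
theorem exists_perm_of_pair_card_eq {ι J : Type*} [Fintype ι] [Fintype J] [DecidableEq ι]
    [DecidableEq J] (A B : ι → Finset J) (hA : ∀ p, (A p).card ≤ 2) (hB : ∀ p, (B p).card ≤ 2)
    (h : ∀ i j, (Finset.univ.filter fun p => i ∈ A p ∧ j ∈ A p).card =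
      (Finset.univ.filter fun p => i ∈ B p ∧ j ∈ B p).card) :
    ∃ σ : Equiv.Perm ι, ∀ p, A (σ p) = B p := by
  have pair : ∀ C : ι → Finset J, (∀ p, (C p).card ≤ 2) → ∀ i j, i ≠ j →
      (Finset.univ.filter fun p => C p = {i, j}) =
        Finset.univ.filter fun p => i ∈ C p ∧ j ∈ C p := by
    intro C hC i j hij
    ext p
    simp only [Finset.mem_filter, Finset.mem_univ, true_and]
    constructor
    · intro e
      simp [e]
    · rintro ⟨hi, hj⟩
      symm
      apply Finset.eq_of_subset_of_card_le
      · simp [Finset.insert_subset_iff, hi, hj]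
      · rw [Finset.card_pair hij]
        exact hC p
  have single : ∀ C : ι → Finset J, (∀ p, (C p).card ≤ 2) → ∀ i,
      (Finset.univ.filter fun p => C p = {i}).card +
        ∑ j ∈ Finset.univ.erase i, (Finset.univ.filter fun p => C p = {i, j}).card =
        (Finset.univ.filter fun p => i ∈ C p ∧ i ∈ C p).card := by
    intro C hC i
    have e : (Finset.univ.filter fun p => i ∈ C p ∧ i ∈ C p) =
        Finset.univ.biUnion fun j => Finset.univ.filter fun p => C p = {i, j} := by
      ext p
      simp only [Finset.mem_filter, Finset.mem_univ, true_and, Finset.mem_biUnion, and_self]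
      constructor
      · intro hi
        by_cases hs : C p = {i}
        · exact ⟨i, by simp [hs]⟩
        · obtain ⟨j, hj, hji⟩ : ∃ j ∈ C p, j ≠ i := by
            by_contra hcon
            push Not at hcon
            exact hs (Finset.eq_singleton_iff_unique_mem.mpr ⟨hi, hcon⟩)
          refine ⟨j, ?_⟩
          symm
          apply Finset.eq_of_subset_of_card_le
          · simp [Finset.insert_subset_iff, hi, hj]
          · rw [Finset.card_pair hji.symm]
            exact hC p
      · rintro ⟨j, hj⟩
        simp [hj]
    rw [e, Finset.card_biUnion, ← Finset.add_sum_erase _ _ (Finset.mem_univ i)]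
    · simp
    · intro j _ k _ hjk
      refine Finset.disjoint_left.mpr fun p hp hq => ?_
      simp only [Finset.mem_filter, Finset.mem_univ, true_and] at hp hq
      rw [hp] at hq
      have hj : j ∈ ({i, k} : Finset J) := by rw [← hq]; simp
      have hk : k ∈ ({i, j} : Finset J) := by rw [hq]; simp
      simp only [Finset.mem_insert, Finset.mem_singleton] at hj hk
      rcases hj with hj | hj
      · rcases hk with hk | hk
        · exact hjk (hj.trans hk.symm)
        · exact hjk hk.symm
      · exact hjk hj
  have pairs : ∀ i j, i ≠ j → (Finset.univ.filter fun p => A p = {i, j}).card =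
      (Finset.univ.filter fun p => B p = {i, j}).card := by
    intro i j hij
    rw [pair A hA i j hij, pair B hB i j hij, h]
  have nonempty : ∀ S : Finset J, S ≠ ∅ → (Finset.univ.filter fun p => A p = S).card =
      (Finset.univ.filter fun p => B p = S).card := by
    intro S hS
    have hpos := (Finset.nonempty_iff_ne_empty.mpr hS).card_pos
    by_cases h1 : S.card = 1
    · obtain ⟨i, rfl⟩ := Finset.card_eq_one.mp h1
      have sA := single A hA i
      have sB := single B hB i
      rw [Finset.sum_congr rfl fun j hj => pairs i j (Finset.ne_of_mem_erase hj).symm, h] at sA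
      omega
    · by_cases h2 : S.card = 2
      · obtain ⟨i, j, hij, rfl⟩ := Finset.card_eq_two.mp h2
        exact pairs i j hij
      · have none : ∀ C : ι → Finset J, (∀ p, (C p).card ≤ 2) →
            (Finset.univ.filter fun p => C p = S) = ∅ := by
          intro C hC
          apply Finset.filter_eq_empty_iff.mpr
          rintro p _ rfl
          have := hC p
          omega
        rw [none A hA, none B hB]
  have all : ∀ S : Finset J, (Finset.univ.filter fun p => A p = S).card =
      (Finset.univ.filter fun p => B p = S).card := by
    intro S
    by_cases hS : S = ∅
    · subst hS
      have total : ∀ C : ι → Finset J, Fintype.card ι =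
          (Finset.univ.filter fun p => C p = ∅).card +
          ∑ T ∈ Finset.univ.erase ∅, (Finset.univ.filter fun p => C p = T).card := by
        intro C
        rw [Finset.add_sum_erase _ (fun T => (Finset.univ.filter fun p => C p = T).card)
          (Finset.mem_univ ∅)]
        exact Finset.card_eq_sum_card_fiberwise fun _ _ => Finset.mem_coe.mpr (Finset.mem_univ _)
      have tA := total A
      have tB := total B
      rw [Finset.sum_congr rfl fun T hT => nonempty T (Finset.ne_of_mem_erase hT)] at tA
      omega
    · exact nonempty S hS
  have e : ∀ S : Finset J, Nonempty ({p // B p = S} ≃ {p // A p = S}) := by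
    intro S
    apply Fintype.card_eq.mp
    rw [Fintype.card_subtype, Fintype.card_subtype, all S]
  have e := fun S => (e S).some
  exact ⟨Equiv.ofFiberEquiv e, fun p => Equiv.ofFiberEquiv_map e p⟩

/-- Lists of twos and threes that begin with three twos and in which every three is preceded by
three twos and followed by three twos and a further entry. -/
inductive IsSparse : List ℕ → Prop
  | base : IsSparse [2, 2, 2, 2]
  | two {L : List ℕ} : IsSparse L → IsSparse (2 :: L)
  | three {L : List ℕ} : IsSparse L → IsSparse (2 :: 2 :: 2 :: 3 :: L)

namespace IsSparse

theorem replicate_append {L : List ℕ} (h : IsSparse L) (k : ℕ) :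
    IsSparse (List.replicate k 2 ++ L) := by
  induction k with
  | zero => simpa
  | succ k ih => exact ih.two

theorem head {L : List ℕ} (h : IsSparse L) :
    4 ≤ L.length ∧ L.getD 0 0 = 2 ∧ L.getD 1 0 = 2 ∧ L.getD 2 0 = 2 := by
  induction h with
  | base => simp
  | two h ih =>
    obtain ⟨h1, h2, h3, h4⟩ := ih
    refine ⟨by simp; omega, by simp, ?_, ?_⟩
    · simpa using h2
    · simpa using h3
  | three h ih => simp

theorem two_or_three {L : List ℕ} (h : IsSparse L) (t : ℕ) (ht : t < L.length) :
    L.getD t 0 = 2 ∨ L.getD t 0 = 3 := by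
  induction h generalizing t with
  | base =>
    simp only [List.length_cons, List.length_nil] at ht
    interval_cases t <;> simp
  | two h ih =>
    rcases t with _ | t
    · simp
    · simpa using ih t (by simpa using ht)
  | three h ih =>
    rcases t with _ | _ | _ | _ | t
    any_goals simp
    simpa using ih t (by simpa using ht)

theorem three_spec {L : List ℕ} (h : IsSparse L) (t : ℕ) (ht : L.getD t 0 = 3) :
    3 ≤ t ∧ t + 4 < L.length ∧ L.getD (t - 1) 0 = 2 ∧ L.getD (t - 2) 0 = 2 ∧
      L.getD (t - 3) 0 = 2 ∧ L.getD (t + 1) 0 = 2 ∧ L.getD (t + 2) 0 = 2 ∧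
      L.getD (t + 3) 0 = 2 := by
  induction h generalizing t with
  | base => rcases t with _ | _ | _ | _ | t <;> simp at ht
  | @two L h ih =>
    rcases t with _ | t
    · simp at ht
    · obtain ⟨h0, h1, h2⟩ := ih t (by simpa using ht)
      obtain ⟨s, rfl⟩ : ∃ s, t = s + 3 := ⟨t - 3, by omega⟩
      refine ⟨by omega, by simp; omega, ?_⟩
      simpa using h2
  | @three L h ih =>
    rcases t with _ | _ | _ | _ | t
    · simp at ht
    · simp at ht
    · simp at ht
    · have := h.head
      simp at this ⊢
      omega
    · obtain ⟨h0, h1, h2⟩ := ih t (by simpa using ht)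
      obtain ⟨s, rfl⟩ : ∃ s, t = s + 3 := ⟨t - 3, by omega⟩
      refine ⟨by omega, by simp; omega, ?_⟩
      simpa using h2

end IsSparse

theorem isSparse_tail (m : ℕ) (a : ℕ → ℕ) (ha : ∀ i, 1 ≤ i → i ≤ m → 6 ≤ a i) (c : ℕ) :
    ∀ s k : ℕ, s + c = m - 1 → 3 ≤ k → (c = 0 → 4 ≤ k) →
      IsSparse (List.replicate k 2 ++ (List.range' s c).flatMap fun i =>
        3 :: List.replicate (a (i + 2) - (if i = m - 2 then 2 else 3)) 2) := by
  induction c with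
  | zero =>
    intro s k _ _ hk
    obtain ⟨d, rfl⟩ : ∃ d, k = d + 4 := ⟨k - 4, by omega⟩
    have := IsSparse.base.replicate_append d
    rw [List.replicate_add]
    simpa using this
  | succ c ih =>
    intro s k hs hk _
    obtain ⟨d, rfl⟩ : ∃ d, k = d + 3 := ⟨k - 3, by omega⟩
    have h6 := ha (s + 2) (by omega) (by omega)
    have := ih (s + 1) (a (s + 2) - (if s = m - 2 then 2 else 3)) (by omega)
      (by split <;> omega) (fun hc => by rw [if_pos (by omega)]; omega)
    have := this.three.replicate_append d
    rw [List.replicate_add, List.range'_succ]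
    simpa using this

theorem isSparse_weightList {m : ℕ} (a : ℕ → ℕ) (hm : 1 ≤ m)
    (ha : ∀ i, 1 ≤ i → i ≤ m → 6 ≤ a i) : IsSparse (weightList m a) := by
  have h1 := ha 1 le_rfl hm
  rw [weightList, List.range_eq_range']
  exact isSparse_tail m a ha (m - 1) 0 _ (by omega) (by omega) (by omega)

theorem getD_three_weightList {m : ℕ} (a : ℕ → ℕ) (h : 6 ≤ a 1) :
    (weightList m a).getD 3 0 = 2 := by
  obtain ⟨d, hd⟩ : ∃ d, a 1 - 2 = d + 4 := ⟨a 1 - 6, by omega⟩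
  simp [weightList, hd, List.replicate_succ]

/-- The images of the standard basis vectors, indexed by the natural numbers. -/
def basisImage {N n : ℕ} (φ : (Fin n → ℤ) →ₗ[ℤ] (Fin N → ℤ)) (j : ℕ) : Fin N → ℤ :=
  if h : j < n then φ (Pi.single ⟨j, h⟩ 1) else 0

theorem basisImage_val {N n : ℕ} (φ : (Fin n → ℤ) →ₗ[ℤ] (Fin N → ℤ)) (j : Fin n) :
    basisImage φ j = φ (Pi.single j 1) := by
  simp [basisImage]

theorem dot_single {N n : ℕ} {φ : (Fin n → ℤ) →ₗ[ℤ] (Fin N → ℤ)} {G : Matrix (Fin n) (Fin n) ℤ}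
    (hform : ∀ v w : Fin n → ℤ, dot (φ v) (φ w) = ∑ i, ∑ j, v i * G i j * w j) (i j : Fin n) :
    dot (φ (Pi.single i 1)) (φ (Pi.single j 1)) = G i j := by
  simp [hform, Pi.single_apply]

theorem isPlumbingChain_basisImage {N : ℕ} {L : List ℕ} (hL : IsSparse L) (h3 : L.getD 3 0 = 2)
    {φ : (Fin L.length → ℤ) →ₗ[ℤ] (Fin N → ℤ)}
    (hform : ∀ v w : Fin L.length → ℤ,
      dot (φ v) (φ w) = ∑ i, ∑ j, v i * linGram L i j * w j) :
    IsPlumbingChain L.length (fun t => L.getD t 0) (basisImage φ) where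
  four_le := hL.head.1
  weight := hL.two_or_three
  three t _ h := by
    have h4 := hL.three_spec t h
    refine ⟨?_, h4.2⟩
    rcases h4.1.eq_or_lt with rfl | h5
    · rw [h3] at h
      omega
    · exact h5
  self j hj := by
    simp [basisImage, hj, dot_single hform, linGram]
  adj j hj := by
    have hj' : j < L.length := by omega
    simp [basisImage, hj, hj', dot_single hform, linGram]
  far i j hij hj := by
    have hi : i < L.length := by omega
    have h1 : i ≠ j := by omega
    have h2 : ¬ (i + 1 = j ∨ j + 1 = i) := by omega
    simp only [basisImage, hj, hi, dite_true, dot_single hform, linGram, Matrix.of_apply,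
      Fin.mk.injEq, h1, h2, if_false]

namespace IsPlumbingChain

variable {N n : ℕ} {w : ℕ → ℕ} {X : ℕ → Fin N → ℤ}

/-- The indices of the vectors that involve the coordinate `p`. -/
def column (n : ℕ) (X : ℕ → Fin N → ℤ) (p : Fin N) : Finset (Fin n) :=
  Finset.univ.filter fun j => X j p ≠ 0

theorem mem_column {p : Fin N} {j : Fin n} : j ∈ column n X p ↔ X j p ≠ 0 := by
  simp [column]

theorem le_succ_of_mem_column (h : IsPlumbingChain n w X) {p : Fin N} {i j : Fin n}
    (hi : i ∈ column n X p) (hj : j ∈ column n X p) : (j : ℕ) ≤ i + 1 := by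
  by_contra hlt
  rw [mem_column] at hi hj
  exact Finset.disjoint_left.mp (h.disjoint (i := i) (j := j) (by omega) j.2)
    (mem_vsupp.mpr hi) (mem_vsupp.mpr hj)

theorem card_column_le (h : IsPlumbingChain n w X) (p : Fin N) : (column n X p).card ≤ 2 := by
  by_contra hlt
  obtain ⟨i, j, k, hi, hj, hk, hij, hik, hjk⟩ := Finset.two_lt_card_iff.mp (not_le.mp hlt)
  have h1 := h.le_succ_of_mem_column hi hj
  have h2 := h.le_succ_of_mem_column hj hi
  have h3 := h.le_succ_of_mem_column hi hk
  have h4 := h.le_succ_of_mem_column hk hi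
  have h5 := h.le_succ_of_mem_column hj hk
  have h6 := h.le_succ_of_mem_column hk hj
  rw [Ne, Fin.ext_iff] at hij hik hjk
  omega

theorem exists_sign (h : IsPlumbingChain n w X) (p : Fin N) :
    ∃ ε : ℤ, (ε = 1 ∨ ε = -1) ∧ ∀ j : Fin n, X j p = if j ∈ column n X p then ε else 0 := by
  rcases (column n X p).eq_empty_or_nonempty with he | ⟨i, hi⟩
  · refine ⟨1, Or.inl rfl, fun j => ?_⟩
    have : j ∉ column n X p := by simp [he]
    rw [if_neg this]
    simpa [mem_column] using this
  · have hi' := mem_column.mp hi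
    have ti := h.ternary i.2 p
    refine ⟨X i p, by tauto, fun j => ?_⟩
    split_ifs with hj
    · have hj' := mem_column.mp hj
      have tj := h.ternary j.2 p
      have h1 := h.le_succ_of_mem_column hi hj
      have h2 := h.le_succ_of_mem_column hj hi
      have hmul : X i p * X j p = 1 ∨ X i p = X j p := by
        rcases lt_trichotomy (i : ℕ) j with hlt | heq | hgt
        · have e : (j : ℕ) = i + 1 := by omega
          have := j.2
          rw [e] at hj' this ⊢
          exact Or.inl (h.mul_eq_one this hi' hj')
        · rw [heq]
          exact Or.inr rfl
        · have e : (i : ℕ) = j + 1 := by omega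
          have := i.2
          rw [e] at hi' this ⊢
          exact Or.inl (by rw [mul_comm]; exact h.mul_eq_one this hj' hi')
      rcases ti with h | h | h <;> rcases tj with h' | h' | h' <;> simp_all
    · simpa [mem_column] using hj

theorem card_pair (h : IsPlumbingChain n w X) (i j : Fin n) :
    (Finset.univ.filter fun p => i ∈ column n X p ∧ j ∈ column n X p).card =
      if i = j then w i else if (i : ℕ) + 1 = j ∨ (j : ℕ) + 1 = i then 1 else 0 := by
  have e : (Finset.univ.filter fun p => i ∈ column n X p ∧ j ∈ column n X p) =
      vsupp (X i) ∩ vsupp (X j) := by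
    ext p
    simp [mem_column, mem_vsupp]
  rw [e]
  split_ifs with h1 h2
  · subst h1
    rw [Finset.inter_self, h.card i.2]
  · rcases h2 with h2 | h2
    · rw [← h2]
      exact h.card_inter_adj (by omega)
    · rw [← h2, Finset.inter_comm]
      exact h.card_inter_adj (by omega)
  · rw [Finset.card_eq_zero, ← Finset.disjoint_iff_inter_eq_empty]
    rw [Fin.ext_iff] at h1
    rcases lt_or_gt_of_ne h1 with h3 | h3
    · exact h.disjoint (by omega) j.2
    · exact (h.disjoint (by omega) i.2).symm

/-- Two realisations of the same chain differ by a signed permutation of the coordinates. -/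
theorem exists_signed_perm {Y : ℕ → Fin N → ℤ} (hX : IsPlumbingChain n w X)
    (hY : IsPlumbingChain n w Y) : ∃ σ : Equiv.Perm (Fin N), ∃ ε : Fin N → ℤ,
      (∀ p, ε p = 1 ∨ ε p = -1) ∧ ∀ (j : Fin n) (p : Fin N), Y j p = ε p * X j (σ p) := by
  obtain ⟨σ, hσ⟩ := exists_perm_of_pair_card_eq (column n X) (column n Y) hX.card_column_le
    hY.card_column_le fun i j => by rw [hX.card_pair, hY.card_pair]
  choose s hs hsX using hX.exists_sign
  choose r hr hrY using hY.exists_sign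
  refine ⟨σ, fun p => r p * s (σ p), fun p => ?_, fun j p => ?_⟩
  · rcases hr p with h | h <;> rcases hs (σ p) with h' | h' <;> simp [h, h']
  · rw [hrY p j, hsX (σ p) j, hσ p]
    split_ifs
    · rcases hs (σ p) with h' | h' <;> simp [h']
    · simp

end IsPlumbingChain

theorem apply_eq_sum_basisImage {N n : ℕ} (φ : (Fin n → ℤ) →ₗ[ℤ] (Fin N → ℤ)) (v : Fin n → ℤ)
    (p : Fin N) : φ v p = ∑ j : Fin n, v j * basisImage φ j p := by
  have e : ∀ j : Fin n, (Pi.single j 1 : Fin n → ℤ) = fun k => if j = k then 1 else 0 := by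
    intro j
    ext k
    simp [Pi.single_apply, eq_comm]
  conv_lhs => rw [LinearMap.pi_apply_eq_sum_univ φ v]
  simp only [Finset.sum_apply, Pi.smul_apply, smul_eq_mul, basisImage_val, e]

/-- Any two embeddings of the linear-graph lattice into `ℤ^N`, for
`N ≥ m + rk(Γ)`, differ by an automorphism of `ℤ^N` given by permuting and
changing signs of the standard basis vectors. -/
theorem stmt11 {N m : ℕ} (hm : 1 ≤ m) (a : ℕ → ℕ) (ha : ∀ i, 1 ≤ i → i ≤ m → 6 ≤ a i)
    (hN : m + (weightList m a).length ≤ N)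
    (φ φ' : (Fin (weightList m a).length → ℤ) →ₗ[ℤ] (Fin N → ℤ))
    (hinj : Function.Injective φ) (hinj' : Function.Injective φ')
    (hform : ∀ v w : Fin (weightList m a).length → ℤ,
      dot (φ v) (φ w) = ∑ i, ∑ j, v i * linGram (weightList m a) i j * w j)
    (hform' : ∀ v w : Fin (weightList m a).length → ℤ,
      dot (φ' v) (φ' w) = ∑ i, ∑ j, v i * linGram (weightList m a) i j * w j) :
    ∃ σ : Equiv.Perm (Fin N), ∃ ε : Fin N → ℤ,
      (∀ i, ε i = 1 ∨ ε i = -1) ∧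
      ∀ v : Fin (weightList m a).length → ℤ, ∀ i : Fin N, φ' v i = ε i * φ v (σ i) := by
  have hL := isSparse_weightList a hm ha
  have h3 := getD_three_weightList (m := m) a (ha 1 le_rfl hm)
  obtain ⟨σ, ε, hε, h⟩ := (isPlumbingChain_basisImage hL h3 hform).exists_signed_perm
    (isPlumbingChain_basisImage hL h3 hform')
  refine ⟨σ, ε, hε, fun v p => ?_⟩
  rw [apply_eq_sum_basisImage, apply_eq_sum_basisImage, Finset.mul_sum]
  refine Finset.sum_congr rfl fun j _ => ?_
  rw [h j p]
  ring
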